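/- arXiv:2110.02380 — 4 statements merged into one kernel-verified Lean document; each statement's English description precedes it below -/
import Mathlib

section
/- Let B be a dense *-subalgebra of a C*-algebra A which is closed under the C^∞-functional calculus of A. Then for every closed two-sided ideal I of A, the intersection I ∩ B is dense in I. -/
/-- Let `B` be a dense *-subalgebra of a C*-algebra `A` which is closed under the
C^∞-functional calculus of `A` (computed in the unitization `Ã`).  Then for every closed
two-sided ideal `I` of `A`, the intersection `I ∩ B` is dense in `I`. -/
theorem ideal_inter_dense_of_smooth_calculus
    {A : Type*} [NonUnitalCStarAlgebra A] [StarModule ℂ A]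
    (B : NonUnitalStarSubalgebra ℂ A)
    (hdense : Dense (B : Set A))
    (hsmooth : ∀ x : Unitization ℂ A, x.snd ∈ B → IsSelfAdjoint x →
      ∀ (U : Set ℝ) (f : ℝ → ℝ), IsOpen U → spectrum ℝ x ⊆ U → ContDiffOn ℝ (⊤ : ℕ∞) f U →
        (cfc f x).snd ∈ B)
    (I : Set A) (hI_closed : IsClosed I)
    (hI_zero : (0 : A) ∈ I)
    (hI_add : ∀ x ∈ I, ∀ y ∈ I, x + y ∈ I)
    (hI_smul : ∀ (c : ℂ), ∀ x ∈ I, c • x ∈ I)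
    (hI_mul_left : ∀ (a : A), ∀ x ∈ I, a * x ∈ I)
    (hI_mul_right : ∀ (a : A), ∀ x ∈ I, x * a ∈ I) :
    ∀ x ∈ I, x ∈ closure (I ∩ (B : Set A)) := by
  intro x hx
  rw [Metric.mem_closure_iff]
  intro ε hε
  set δ : ℝ := ε ^ 2 / 32 with hδdef
  have hδ : 0 < δ := by positivity
  -- choose b near x
  have hopen : IsOpen {b : A | ‖x - b‖ < ε / 2 ∧ ‖star b * b - star x * x‖ < δ} := by
    apply IsOpen.inter
    · exact isOpen_lt (f := fun b : A => ‖x - b‖) (by fun_prop) continuous_const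
    · exact isOpen_lt (f := fun b : A => ‖star b * b - star x * x‖) (by fun_prop) continuous_const
  obtain ⟨b, hbB, hb1, hb2⟩ : ∃ b ∈ (B : Set A), ‖x - b‖ < ε / 2 ∧
      ‖star b * b - star x * x‖ < δ := by
    obtain ⟨b, hb, hbB⟩ := hdense.inter_open_nonempty _ hopen ⟨x, by simp [hε, hδ]⟩
    exact ⟨b, hbB, hb⟩
  have hbB' : b ∈ B := hbB
  set b' : Unitization ℂ A := (b : Unitization ℂ A) with hb'
  set h : Unitization ℂ A := star b' * b' with hh
  have hh_eq : h = ((star b * b : A) : Unitization ℂ A) := by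
    simp [hh, hb']
  have hsa : IsSelfAdjoint h := IsSelfAdjoint.star_mul_self b'
  set y : Unitization ℂ A := ((star x * x : A) : Unitization ℂ A) with hy
  set r : Unitization ℂ A := h - y with hr
  have hrn : ‖r‖ < δ := by
    have : r = ((star b * b - star x * x : A) : Unitization ℂ A) := by
      rw [hr, hh_eq, hy, Unitization.inr_sub]
    rw [this, Unitization.norm_inr]
    exact hb2
  let f : ℝ → ℝ := fun t => Real.smoothTransition ((t - 2 * δ) / (2 * δ))
  let g : ℝ → ℝ := fun t => (max t (2 * δ))⁻¹
  have hfs : ContDiff ℝ (⊤ : ℕ∞) f := by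
    apply Real.smoothTransition.contDiff.comp
    exact (contDiff_id.sub contDiff_const).div_const _
  have hfc : Continuous f := hfs.continuous
  have hgpos : ∀ t, 0 < max t (2 * δ) := fun t => lt_max_of_lt_right (by positivity)
  have hgc : Continuous g := by
    apply Continuous.inv₀ (by fun_prop)
    intro t
    exact (hgpos t).ne'
  set k : Unitization ℂ A := cfc f h with hk
  set G : Unitization ℂ A := cfc g h with hG
  have hkB : k.snd ∈ B := by
    refine hsmooth h ?_ hsa Set.univ f isOpen_univ (Set.subset_univ _) hfs.contDiffOn
    rw [hh_eq, Unitization.snd_inr]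
    exact mul_mem (star_mem hbB') hbB'
  have hGn : ‖G‖ ≤ (2 * δ)⁻¹ := by
    apply norm_cfc_le (by positivity)
    intro t _
    simp only [g]
    rw [Real.norm_of_nonneg (inv_nonneg.2 (hgpos t).le)]
    exact inv_anti₀ (by positivity) (le_max_right _ _)
  have hkGh : k = k * G * h := by
    have hid : cfc (fun t : ℝ => t) h = h := cfc_id' ℝ h
    conv_rhs => rw [← hid, hk, hG]
    rw [← cfc_mul f g h hfc.continuousOn hgc.continuousOn,
      ← cfc_mul (fun t => f t * g t) (fun t => t) h (hfc.mul hgc).continuousOn continuousOn_id]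
    apply cfc_congr
    intro t _
    simp only [f, g]
    rcases le_total t (2 * δ) with ht | ht
    · rw [Real.smoothTransition.zero_of_nonpos]
      · simp
      · exact div_nonpos_of_nonpos_of_nonneg (by linarith) (by positivity)
    · rw [max_eq_left ht]
      have : t ≠ 0 := by linarith
      field_simp
  have hGr : ‖G * r‖ < 1 := by
    calc ‖G * r‖ ≤ ‖G‖ * ‖r‖ := norm_mul_le _ _
      _ ≤ (2 * δ)⁻¹ * δ := by gcongr
      _ = 1 / 2 := by field_simp
      _ < 1 := by norm_num
  obtain ⟨u, hu⟩ : IsUnit (1 - G * r) := isUnit_one_sub_of_norm_lt_one hGr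
  have hkey : k = k * G * y * (↑u⁻¹ : Unitization ℂ A) := by
    rw [Units.eq_mul_inv_iff_mul_eq, hu, mul_sub, mul_one, hr]
    calc k - k * (G * (h - y)) = k - k * G * h + k * G * y := by noncomm_ring
      _ = k * G * y := by rw [← hkGh, sub_self, zero_add]
  have hyI : star x * x ∈ I := hI_mul_left _ _ hx
  have hL : ∀ (w : Unitization ℂ A) (z : A), z ∈ I →
      ∃ z' ∈ I, w * (z : Unitization ℂ A) = (z' : Unitization ℂ A) := by
    intro w z hz
    refine ⟨w.fst • z + w.snd * z, hI_add _ (hI_smul _ _ hz) _ (hI_mul_left _ _ hz), ?_⟩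
    ext <;> simp
  have hR : ∀ (w : Unitization ℂ A) (z : A), z ∈ I →
      ∃ z' ∈ I, (z : Unitization ℂ A) * w = (z' : Unitization ℂ A) := by
    intro w z hz
    refine ⟨w.fst • z + z * w.snd, hI_add _ (hI_smul _ _ hz) _ (hI_mul_right _ _ hz), ?_⟩
    ext <;> simp
  obtain ⟨z, hzI, hz⟩ : ∃ z ∈ I, k = (z : Unitization ℂ A) := by
    obtain ⟨z1, hz1, e1⟩ := hL (k * G) _ hyI
    obtain ⟨z2, hz2, e2⟩ := hR (↑u⁻¹) _ hz1
    exact ⟨z2, hz2, by rw [hkey, hy, e1, e2]⟩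
  have hzB : z ∈ B := by
    rw [hz, Unitization.snd_inr] at hkB
    exact hkB
  refine ⟨b * z, ⟨hI_mul_left _ _ hzI, mul_mem hbB' hzB⟩, ?_⟩
  have hksa : star k = k := (cfc_predicate f h : IsSelfAdjoint (cfc f h))
  have hn : ‖b' * (1 - k)‖ * ‖b' * (1 - k)‖ ≤ 4 * δ := by
    rw [← CStarRing.norm_star_mul_self]
    have e : star (b' * (1 - k)) * (b' * (1 - k)) = cfc (fun t => (1 - f t) * t * (1 - f t)) h := by
      have hid : cfc (fun t : ℝ => t) h = h := cfc_id' ℝ h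
      have h1 : cfc (fun t : ℝ => 1 - f t) h = 1 - k := by
        rw [cfc_sub (fun _ => (1 : ℝ)) f h continuousOn_const hfc.continuousOn, cfc_const_one ℝ h]
      rw [cfc_mul (fun t => (1 - f t) * t) (fun t => 1 - f t) h (by fun_prop) (by fun_prop),
        cfc_mul (fun t => (1 - f t)) (fun t => t) h (by fun_prop) (by fun_prop), h1, hid,
        star_mul, star_sub, star_one, hksa, hh]
      noncomm_ring
    rw [e]
    apply norm_cfc_le (by positivity)
    intro t ht
    have ht0 : 0 ≤ t := spectrum_star_mul_self_nonneg (b := b') t ht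
    have hf0 : 0 ≤ f t := Real.smoothTransition.nonneg _
    have hf1 : f t ≤ 1 := Real.smoothTransition.le_one _
    have h2 : 0 ≤ 1 - f t := by linarith
    rw [Real.norm_of_nonneg (by positivity)]
    rcases le_total t (4 * δ) with h4 | h4
    · have a1 : (1 - f t) * t ≤ 1 * t := by gcongr; linarith
      calc (1 - f t) * t * (1 - f t) ≤ (1 * t) * 1 := by gcongr; linarith
        _ ≤ 4 * δ := by linarith
    · have : f t = 1 := by
        apply Real.smoothTransition.one_of_one_le
        rw [le_div_iff₀ (by positivity)]
        linarith
      rw [this]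
      simp
      positivity
  have hn2 : ‖b - b * z‖ < ε / 2 := by
    have e : b' * (1 - k) = ((b - b * z : A) : Unitization ℂ A) := by
      rw [hz, hb', mul_sub, mul_one, ← Unitization.inr_mul, ← Unitization.inr_sub]
    rw [e, Unitization.norm_inr] at hn
    by_contra! hc
    nlinarith [mul_self_le_mul_self (by positivity : 0 ≤ ε / 2) hc, sq_pos_of_pos hε]
  rw [dist_eq_norm]
  calc ‖x - b * z‖ = ‖(x - b) + (b - b * z)‖ := by congr 1; abel
    _ ≤ ‖x - b‖ + ‖b - b * z‖ := norm_add_le _ _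
    _ < ε := by linarith
end

section
/- Let B be a dense *-subalgebra of a C*-algebra A which is spectrally invariant in A and closed under the C^∞-functional calculus of A. Then any C*-norm on B equals the restriction of the norm of A to B; in particular B admits a unique C*-norm. -/
/-- Let `B` be a dense *-subalgebra of a C*-algebra `A` which is spectrally invariant in `A`
and closed under the C^∞-functional calculus of `A`.  Then every C*-norm on `B` coincides with
the restriction of `‖·‖_A` to `B`; in particular `B` admits a unique C*-norm. -/
theorem cstar_norm_unique
    {A : Type*} [NonUnitalCStarAlgebra A] [StarModule ℂ A]
    (B : NonUnitalStarSubalgebra ℂ A)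
    (hdense : Dense (B : Set A))
    (hspec : ∀ x : Unitization ℂ A, x.snd ∈ B →
      ∀ y : Unitization ℂ A, x * y = 1 → y * x = 1 → y.snd ∈ B)
    (hsmooth : ∀ x : Unitization ℂ A, x.snd ∈ B → IsSelfAdjoint x →
      ∀ (U : Set ℝ) (f : ℝ → ℝ), IsOpen U → spectrum ℝ x ⊆ U → ContDiffOn ℝ (⊤ : ℕ∞) f U →
        (cfc f x).snd ∈ B)
    (q : A → ℝ)
    (hq_nonneg : ∀ b ∈ B, 0 ≤ q b)
    (hq_definite : ∀ b ∈ B, q b = 0 → b = 0)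
    (hq_smul : ∀ b ∈ B, ∀ c : ℂ, q (c • b) = ‖c‖ * q b)
    (hq_add : ∀ b ∈ B, ∀ b' ∈ B, q (b + b') ≤ q b + q b')
    (hq_mul : ∀ b ∈ B, ∀ b' ∈ B, q (b * b') ≤ q b * q b')
    (hq_star : ∀ b ∈ B, q (star b) = q b)
    (hq_cstar : ∀ b ∈ B, q (star b * b) = q b ^ 2) :
    ∀ b ∈ B, q b = ‖b‖ := by
  have hsm : ∀ h ∈ B, IsSelfAdjoint h → ∀ (U : Set ℝ) (f : ℝ → ℝ), IsOpen U →
      quasispectrum ℝ h ⊆ U → ContDiffOn ℝ (⊤ : ℕ∞) f U → f 0 = 0 → cfcₙ f h ∈ B := by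
    intro h hB hsa U f hU hsub hf h0
    have := hsmooth (h : Unitization ℂ A) (by simpa using hB) (hsa.inr ℂ) U f hU
      (by rwa [← Unitization.quasispectrum_eq_spectrum_inr' ℝ ℂ]) hf
    rw [← Unitization.real_cfcₙ_eq_cfc_inr h f h0] at this
    simpa using this
  have hbd : ∀ h : A, IsSelfAdjoint h → ∀ x ∈ quasispectrum ℝ h, |x| ≤ ‖h‖ := by
    intro h hsa x hx
    have := norm_apply_le_norm_cfcₙ (id : ℝ → ℝ) h hx continuousOn_id rfl hsa
    rwa [cfcₙ_id ℝ h hsa] at this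
  -- contractivity, strict unit ball
  have step1 : ∀ h ∈ B, IsSelfAdjoint h → ‖h‖ < 1 → q h ≤ 1 := by
    intro h hB hsa hlt
    set f : ℝ → ℝ := fun x => x * Real.sqrt (1 - x ^ 2) with hfdef
    have hfc : Continuous f := by fun_prop
    have hf0 : f 0 = 0 := by simp [hfdef]
    have hsub : quasispectrum ℝ h ⊆ Set.Ioo (-1 : ℝ) 1 := fun x hx =>
      abs_lt.mp ((hbd h hsa x hx).trans_lt hlt)
    have hwB : cfcₙ f h ∈ B := by
      refine hsm h hB hsa (Set.Ioo (-1) 1) f isOpen_Ioo hsub ?_ hf0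
      refine contDiffOn_id.mul (ContDiffOn.sqrt (by fun_prop) ?_)
      intro x hx
      have : 0 < 1 - x ^ 2 := by nlinarith [hx.1, hx.2]
      exact this.ne'
    have hwsa : IsSelfAdjoint (cfcₙ f h) := cfcₙ_predicate f h
    have hcomm : Commute h (cfcₙ f h) := by
      have := cfcₙ_commute_cfcₙ (id : ℝ → ℝ) f h
      rwa [cfcₙ_id ℝ h hsa] at this
    have hid : h * h * (h * h) + cfcₙ f h * cfcₙ f h = h * h := by
      have e2 : cfcₙ (fun x : ℝ => x * x) h = h * h := by
        rw [cfcₙ_mul (fun x : ℝ => x) (fun x => x) h, cfcₙ_id' ℝ h hsa]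
      have e4 : cfcₙ (fun x : ℝ => (x * x) * (x * x)) h = h * h * (h * h) := by
        rw [cfcₙ_mul (fun x : ℝ => x * x) (fun x => x * x) h, e2]
      have ew : cfcₙ (fun x : ℝ => f x * f x) h = cfcₙ f h * cfcₙ f h :=
        cfcₙ_mul f f h hfc.continuousOn hf0 hfc.continuousOn hf0
      rw [← e4, ← ew, ← cfcₙ_add (fun x : ℝ => (x * x) * (x * x)) (fun x => f x * f x) h
        (by fun_prop) (by simp) (by fun_prop) (by simp [hf0]), ← e2]
      apply cfcₙ_congr
      intro x hx
      have hx := hsub hx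
      have : Real.sqrt (1 - x ^ 2) * Real.sqrt (1 - x ^ 2) = 1 - x ^ 2 :=
        Real.mul_self_sqrt (by nlinarith [hx.1, hx.2])
      simp only [hfdef]
      linear_combination x ^ 2 * this
    set w := cfcₙ f h with hw
    have hhB : h * h ∈ B := mul_mem hB hB
    have hyB : h * h + Complex.I • w ∈ B := add_mem hhB (SMulMemClass.smul_mem _ hwB)
    have hstar : star (h * h + Complex.I • w) = h * h - Complex.I • w := by
      rw [star_add, star_mul, star_smul, hsa.star_eq, hwsa.star_eq]
      simp [sub_eq_add_neg]
    have hyy : star (h * h + Complex.I • w) * (h * h + Complex.I • w) = h * h := by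
      rw [hstar]
      have hc : h * h * w = w * (h * h) := (hcomm.mul_left hcomm).eq
      rw [sub_mul, mul_add, mul_add, smul_mul_smul_comm, Complex.I_mul_I, mul_smul_comm,
        smul_mul_assoc, hc, neg_one_smul]
      rw [← sub_eq_zero, ← sub_eq_zero.mpr hid]
      abel
    have hqy : q (h * h + Complex.I • w) = q h := by
      have h1 := hq_cstar _ hyB
      have h2 := hq_cstar _ hB
      rw [hyy] at h1
      rw [hsa.star_eq, h1] at h2
      exact (sq_eq_sq₀ (hq_nonneg _ hyB) (hq_nonneg _ hB)).mp h2
    have hsum : (2 : ℂ) • (h * h) = (h * h + Complex.I • w) + star (h * h + Complex.I • w) := by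
      rw [hstar, two_smul]; abel
    have h3 := hq_add _ hyB _ (star_mem hyB)
    rw [← hsum, hq_smul _ hhB, hq_star _ hyB, hqy] at h3
    have h4 := hq_cstar _ hB
    rw [hsa.star_eq] at h4
    rw [h4] at h3
    norm_num at h3
    have := hq_nonneg _ hB
    nlinarith
  have step1' : ∀ h ∈ B, IsSelfAdjoint h → q h ≤ ‖h‖ := by
    intro h hB hsa
    refine le_of_forall_gt_imp_ge_of_dense fun c hc => ?_
    have hc0 : 0 < c := (norm_nonneg h).trans_lt hc
    have hn : ‖((c⁻¹ : ℝ) : ℂ)‖ = c⁻¹ := by simp [abs_of_pos hc0]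
    have h1 := step1 (((c⁻¹ : ℝ) : ℂ) • h) (SMulMemClass.smul_mem _ hB)
      (by
        rw [IsSelfAdjoint, star_smul, hsa.star_eq]
        simp)
      (by
        rw [norm_smul, hn, inv_mul_lt_iff₀ hc0]; simpa using hc)
    rw [hq_smul _ hB, hn, inv_mul_le_iff₀ hc0] at h1
    simpa using h1
  have step2 : ∀ h ∈ B, IsSelfAdjoint h → ‖h‖ ≤ q h := by
    intro h hB hsa
    by_contra! hlt
    obtain ⟨r, hr1, hr2⟩ := exists_between hlt
    obtain ⟨s, hs1, hs2⟩ := exists_between hr1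
    have hs0 : 0 < s := (hq_nonneg _ hB).trans_lt hs1
    have hD : 0 < r ^ 2 - s ^ 2 := by nlinarith
    set f : ℝ → ℝ := fun x => expNegInvGlue (x ^ 2 - r ^ 2) with hfdef
    set g : ℝ → ℝ := fun x => Real.smoothTransition ((x ^ 2 - s ^ 2) / (r ^ 2 - s ^ 2)) / x
      with hgdef
    have hf : ContDiff ℝ (⊤ : ℕ∞) f := expNegInvGlue.contDiff.comp (by fun_prop)
    have hf0 : f 0 = 0 := by
      simp only [hfdef]
      exact expNegInvGlue.zero_of_nonpos (by nlinarith)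
    have hg0 : g 0 = 0 := by simp [hgdef]
    have hgz : ∀ x : ℝ, |x| ≤ s → g x = 0 := by
      intro x hx
      simp only [hgdef]
      rw [Real.smoothTransition.zero_of_nonpos, zero_div]
      refine div_nonpos_of_nonpos_of_nonneg ?_ hD.le
      have := sq_le_sq' (by linarith [abs_nonneg x]) hx
      rw [sq_abs] at this
      linarith
    have hg : ContDiff ℝ (⊤ : ℕ∞) g := by
      rw [contDiff_iff_contDiffAt]
      intro x
      by_cases hx : x = 0
      · subst hx
        refine (contDiffAt_const (c := (0 : ℝ))).congr_of_eventuallyEq ?_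
        filter_upwards [Metric.ball_mem_nhds (0 : ℝ) hs0] with y hy
        exact hgz y (by simpa using (mem_ball_zero_iff.mp hy).le)
      · refine ContDiffAt.div ?_ contDiffAt_id hx
        exact (Real.smoothTransition.contDiff.comp
          (by fun_prop : ContDiff ℝ (⊤ : ℕ∞)
            (fun x : ℝ => (x ^ 2 - s ^ 2) / (r ^ 2 - s ^ 2)))).contDiffAt
    have hgb : ∀ x : ℝ, ‖g x‖ ≤ s⁻¹ := by
      intro x
      by_cases hx : |x| ≤ s
      · rw [hgz x hx]; simpa using hs0.le
      · push Not at hx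
        simp only [hgdef, Real.norm_eq_abs, abs_div]
        rw [abs_of_nonneg (Real.smoothTransition.nonneg _), ← one_div]
        exact div_le_div₀ zero_le_one (Real.smoothTransition.le_one _) hs0 hx.le
    have hkB : cfcₙ f h ∈ B :=
      hsm h hB hsa Set.univ f isOpen_univ (Set.subset_univ _) hf.contDiffOn hf0
    have hgB : cfcₙ g h ∈ B :=
      hsm h hB hsa Set.univ g isOpen_univ (Set.subset_univ _) hg.contDiffOn hg0
    have hgsa : IsSelfAdjoint (cfcₙ g h) := cfcₙ_predicate g h
    have hqg : q (cfcₙ g h) ≤ s⁻¹ :=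
      (step1' _ hgB hgsa).trans (norm_cfcₙ_le fun x _ => hgb x)
    have hfc := hf.continuous
    have hgc := hg.continuous
    have hfac : cfcₙ f h = cfcₙ g h * (h * cfcₙ f h) := by
      have e1 : cfcₙ (fun x : ℝ => x * f x) h = h * cfcₙ f h := by
        rw [cfcₙ_mul (fun x : ℝ => x) f h (by fun_prop) rfl hfc.continuousOn hf0,
          cfcₙ_id' ℝ h hsa]
      rw [← e1, ← cfcₙ_mul g (fun x : ℝ => x * f x) h hgc.continuousOn hg0
        (by fun_prop) (by simp)]
      apply cfcₙ_congr
      intro x _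
      by_cases hx : x ^ 2 - r ^ 2 ≤ 0
      · have : f x = 0 := expNegInvGlue.zero_of_nonpos hx
        simp [this]
      · push Not at hx
        have hx0 : x ≠ 0 := by
          rintro rfl
          nlinarith
        have hgx : g x = 1 / x := by
          simp only [hgdef]
          rw [Real.smoothTransition.one_of_one_le]
          rw [le_div_iff₀ hD]
          linarith
        simp only [hgx]
        field_simp
    have hqk0 := hq_nonneg _ hkB
    have hqk : q (cfcₙ f h) = 0 := by
      have h1 : q (cfcₙ f h) ≤ q (cfcₙ g h) * (q h * q (cfcₙ f h)) := by
        calc q (cfcₙ f h) = q (cfcₙ g h * (h * cfcₙ f h)) := by rw [← hfac]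
          _ ≤ q (cfcₙ g h) * q (h * cfcₙ f h) := hq_mul _ hgB _ (mul_mem hB hkB)
          _ ≤ _ := mul_le_mul_of_nonneg_left (hq_mul _ hB _ hkB) (hq_nonneg _ hgB)
      have h2 : q (cfcₙ g h) * (q h * q (cfcₙ f h)) ≤ s⁻¹ * (q h * q (cfcₙ f h)) :=
        mul_le_mul_of_nonneg_right hqg (mul_nonneg (hq_nonneg _ hB) hqk0)
      have h3 := h1.trans h2
      rw [le_inv_mul_iff₀ hs0] at h3
      nlinarith
    have hk := hq_definite _ hkB hqk
    have : ‖h‖ ≤ r := by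
      conv_lhs => rw [← cfcₙ_id ℝ h hsa]
      refine norm_cfcₙ_le fun x hx => ?_
      have hfx := norm_apply_le_norm_cfcₙ f h hx hfc.continuousOn hf0 hsa
      rw [hk, norm_zero, norm_le_zero_iff] at hfx
      have hle : x ^ 2 - r ^ 2 ≤ 0 := expNegInvGlue.zero_iff_nonpos.mp hfx
      exact abs_le_of_sq_le_sq (show x ^ 2 ≤ r ^ 2 by linarith) (by linarith)
    linarith
  intro b hb
  have hbb : star b * b ∈ B := mul_mem (star_mem hb) hb
  have hsa : IsSelfAdjoint (star b * b) := IsSelfAdjoint.star_mul_self b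
  have h1 := le_antisymm (step1' _ hbb hsa) (step2 _ hbb hsa)
  rw [hq_cstar _ hb, CStarRing.norm_star_mul_self, ← sq] at h1
  exact (sq_eq_sq₀ (hq_nonneg _ hb) (norm_nonneg _)).mp h1
end

section
/- Let C be a C*-algebra and b ∈ B^C(ℝ²). Define a(x,ξ) := ∫_{ℝ²} γ₂(s) γ₂(t) b(x−s, ξ−t) ds dt, where γ₂(t) = t e^{−t} for t ≥ 0 and γ₂(t) = 0 for t < 0. Then a ∈ B^C(ℝ²) and (1+∂_ξ)²(1+∂_x)² a = b; moreover a is the unique element of B^C(ℝ²) with this property, so D := (1+∂_ξ)²(1+∂_x)² is a bijection of B^C(ℝ²). -/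
open MeasureTheory

/-- Membership in `B^C(ℝ²)`: bounded smooth functions all of whose derivatives are bounded. -/
def IsBC {C : Type*} [NonUnitalCStarAlgebra C] (f : ℝ × ℝ → C) : Prop :=
  ContDiff ℝ (⊤ : ℕ∞) f ∧ ∀ k : ℕ, ∃ M : ℝ, ∀ p : ℝ × ℝ, ‖iteratedFDeriv ℝ k f p‖ ≤ M

/-- The function `γ₂`. -/
noncomputable def gamma2 (t : ℝ) : ℝ := if 0 ≤ t then t * Real.exp (-t) else 0

/-- The operator `1 + ∂ₓ` (derivative in the first variable). -/
noncomputable def onePlusDx {C : Type*} [NonUnitalCStarAlgebra C]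
    (f : ℝ × ℝ → C) : ℝ × ℝ → C :=
  fun p => f p + fderiv ℝ f p (1, 0)

/-- The operator `1 + ∂_ξ` (derivative in the second variable). -/
noncomputable def onePlusDxi {C : Type*} [NonUnitalCStarAlgebra C]
    (f : ℝ × ℝ → C) : ℝ × ℝ → C :=
  fun p => f p + fderiv ℝ f p (0, 1)

/-- The operator `D = (1+∂_ξ)²(1+∂ₓ)²`. -/
noncomputable def Dop {C : Type*} [NonUnitalCStarAlgebra C]
    (f : ℝ × ℝ → C) : ℝ × ℝ → C :=
  onePlusDxi (onePlusDxi (onePlusDx (onePlusDx f)))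


section helpers

open Filter Topology Set

/-- `IsBC` for general normed spaces. -/
def IsB {F : Type*} [NormedAddCommGroup F] [NormedSpace ℝ F] (f : ℝ × ℝ → F) : Prop :=
  ContDiff ℝ (⊤ : ℕ∞) f ∧ ∀ k : ℕ, ∃ M : ℝ, ∀ p : ℝ × ℝ, ‖iteratedFDeriv ℝ k f p‖ ≤ M

/-- `1 + ∂_v`. -/
noncomputable def opP {F : Type*} [NormedAddCommGroup F] [NormedSpace ℝ F] (v : ℝ × ℝ)
    (f : ℝ × ℝ → F) : ℝ × ℝ → F := fun p => f p + fderiv ℝ f p v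

/-- The convolution operator. -/
noncomputable def opK {F : Type*} [NormedAddCommGroup F] [NormedSpace ℝ F]
    (f : ℝ × ℝ → F) : ℝ × ℝ → F :=
  fun p => ∫ q : ℝ × ℝ, (gamma2 q.1 * gamma2 q.2) • f (p.1 - q.1, p.2 - q.2)

theorem IsB.bdd {F : Type*} [NormedAddCommGroup F] [NormedSpace ℝ F] {f : ℝ × ℝ → F}
    (hf : IsB f) : ∃ M, ∀ p, ‖f p‖ ≤ M := by
  obtain ⟨M, hM⟩ := hf.2 0
  exact ⟨M, fun p => by simpa using hM p⟩

theorem IsB.fderiv' {F : Type*} [NormedAddCommGroup F] [NormedSpace ℝ F] {f : ℝ × ℝ → F}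
    (hf : IsB f) : IsB (fderiv ℝ f) := by
  refine ⟨(contDiff_infty_iff_fderiv.1 hf.1).2, fun k => ?_⟩
  obtain ⟨M, hM⟩ := hf.2 (k + 1)
  exact ⟨M, fun p => by rw [norm_iteratedFDeriv_fderiv]; exact hM p⟩

theorem IsB.differentiable {F : Type*} [NormedAddCommGroup F] [NormedSpace ℝ F] {f : ℝ × ℝ → F}
    (hf : IsB f) : Differentiable ℝ f := (contDiff_infty_iff_fderiv.1 hf.1).1

theorem IsB.add {F : Type*} [NormedAddCommGroup F] [NormedSpace ℝ F] {f g : ℝ × ℝ → F}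
    (hf : IsB f) (hg : IsB g) : IsB (f + g) := by
  refine ⟨hf.1.add hg.1, fun k => ?_⟩
  obtain ⟨M, hM⟩ := hf.2 k
  obtain ⟨N, hN⟩ := hg.2 k
  refine ⟨M + N, fun p => ?_⟩
  rw [iteratedFDeriv_add_apply ((hf.1.of_le (by exact_mod_cast le_top)).contDiffAt)
    ((hg.1.of_le (by exact_mod_cast le_top)).contDiffAt)]
  exact (norm_add_le _ _).trans (add_le_add (hM p) (hN p))

theorem IsB.clm {F G : Type*} [NormedAddCommGroup F] [NormedSpace ℝ F]
    [NormedAddCommGroup G] [NormedSpace ℝ G] {f : ℝ × ℝ → F}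
    (hf : IsB f) (L : F →L[ℝ] G) : IsB (L ∘ f) := by
  refine ⟨L.contDiff.comp hf.1, fun k => ?_⟩
  obtain ⟨M, hM⟩ := hf.2 k
  refine ⟨‖L‖ * M, fun p => ?_⟩
  refine (L.norm_iteratedFDeriv_comp_left (N := (⊤ : ℕ∞)) hf.1.contDiffAt
    (by exact_mod_cast le_top)).trans ?_
  gcongr
  exact hM p

theorem IsB.dir {F : Type*} [NormedAddCommGroup F] [NormedSpace ℝ F] {f : ℝ × ℝ → F}
    (hf : IsB f) (v : ℝ × ℝ) : IsB (fun p => fderiv ℝ f p v) :=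
  hf.fderiv'.clm (ContinuousLinearMap.apply ℝ F v)

theorem IsB.opP {F : Type*} [NormedAddCommGroup F] [NormedSpace ℝ F] {f : ℝ × ℝ → F}
    (hf : IsB f) (v : ℝ × ℝ) : IsB (opP v f) := hf.add (hf.dir v)

theorem gamma2_eq : gamma2 = (Ioi (0 : ℝ)).indicator (fun t => t * Real.exp (-t)) := by
  ext t
  unfold gamma2
  rcases lt_trichotomy t 0 with h | h | h
  · simp [h.not_ge, h.le]
  · simp [h]
  · simp [h, h.le]

theorem gamma2_integrable : Integrable gamma2 := by
  rw [gamma2_eq, integrable_indicator_iff measurableSet_Ioi]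
  refine (Real.GammaIntegral_convergent (s := 2) (by norm_num)).congr_fun ?_ measurableSet_Ioi
  intro t _
  have : (2 : ℝ) - 1 = 1 := by norm_num
  simp [this, mul_comm]

theorem ker_integrable : Integrable (fun q : ℝ × ℝ => gamma2 q.1 * gamma2 q.2) :=
  gamma2_integrable.mul_prod gamma2_integrable

theorem IsB.integrable {F : Type*} [NormedAddCommGroup F] [NormedSpace ℝ F] {f : ℝ × ℝ → F}
    (hf : IsB f) (p : ℝ × ℝ) :
    Integrable (fun q : ℝ × ℝ => (gamma2 q.1 * gamma2 q.2) • f (p.1 - q.1, p.2 - q.2)) := by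
  obtain ⟨M, hM⟩ := hf.bdd
  have hc := hf.1.continuous
  exact ker_integrable.smul_bdd M
    (Continuous.aestronglyMeasurable (by fun_prop)) (ae_of_all _ fun q => hM _)

theorem IsB.hasFDerivAt_opK {F : Type*} [NormedAddCommGroup F] [NormedSpace ℝ F]
    {f : ℝ × ℝ → F} (hf : IsB f) (p : ℝ × ℝ) :
    HasFDerivAt (opK f) (opK (fderiv ℝ f) p) p := by
  obtain ⟨M, hM⟩ := hf.fderiv'.bdd
  unfold opK
  refine hasFDerivAt_integral_of_dominated_of_fderiv_le
    (F := fun (p q : ℝ × ℝ) => (gamma2 q.1 * gamma2 q.2) • f (p.1 - q.1, p.2 - q.2))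
    (F' := fun (p q : ℝ × ℝ) =>
      (gamma2 q.1 * gamma2 q.2) • fderiv ℝ f (p.1 - q.1, p.2 - q.2))
    (bound := fun q => ‖gamma2 q.1 * gamma2 q.2‖ * M)
    (s := univ) univ_mem ?_ (hf.integrable p) (hf.fderiv'.integrable p).1 ?_ ?_ ?_
  · exact Eventually.of_forall fun x => (hf.integrable x).1
  · refine ae_of_all _ fun q x _ => ?_
    rw [norm_smul]
    gcongr
    exact hM _
  · exact ker_integrable.norm.mul_const M
  · refine ae_of_all _ fun q x _ => ?_
    have h := (hf.differentiable (x - q)).hasFDerivAt.comp x ((hasFDerivAt_id x).sub_const q)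
    exact h.const_smul _

theorem IsB.fderiv_opK {F : Type*} [NormedAddCommGroup F] [NormedSpace ℝ F]
    {f : ℝ × ℝ → F} (hf : IsB f) : fderiv ℝ (opK f) = opK (fderiv ℝ f) :=
  funext fun p => (hf.hasFDerivAt_opK p).fderiv

theorem opK_contDiff (n : ℕ) : ∀ {F : Type*} [NormedAddCommGroup F] [NormedSpace ℝ F]
    {f : ℝ × ℝ → F}, IsB f → ContDiff ℝ n (opK f) := by
  induction n with
  | zero =>
    intro F _ _ f hf
    have : Differentiable ℝ (opK f) := fun p => (hf.hasFDerivAt_opK p).differentiableAt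
    exact contDiff_zero.2 this.continuous
  | succ n ih =>
    intro F _ _ f hf
    have : Differentiable ℝ (opK f) := fun p => (hf.hasFDerivAt_opK p).differentiableAt
    push_cast
    rw [contDiff_succ_iff_fderiv]
    refine ⟨this, by simp, ?_⟩
    rw [hf.fderiv_opK]
    exact ih hf.fderiv'

theorem opK_bdd (n : ℕ) : ∀ {F : Type*} [NormedAddCommGroup F] [NormedSpace ℝ F]
    {f : ℝ × ℝ → F}, IsB f → ∃ M : ℝ, ∀ p : ℝ × ℝ, ‖iteratedFDeriv ℝ n (opK f) p‖ ≤ M := by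
  induction n with
  | zero =>
    intro F _ _ f hf
    obtain ⟨M, hM⟩ := hf.bdd
    refine ⟨∫ q : ℝ × ℝ, ‖gamma2 q.1 * gamma2 q.2‖ * M, fun p => ?_⟩
    rw [norm_iteratedFDeriv_zero]
    refine norm_integral_le_of_norm_le (ker_integrable.norm.mul_const M)
      (ae_of_all _ fun q => ?_)
    rw [norm_smul]
    gcongr
    exact hM _
  | succ n ih =>
    intro F _ _ f hf
    obtain ⟨M, hM⟩ := ih hf.fderiv'
    refine ⟨M, fun p => ?_⟩
    rw [← norm_iteratedFDeriv_fderiv, hf.fderiv_opK]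
    exact hM p

theorem IsB.opK {F : Type*} [NormedAddCommGroup F] [NormedSpace ℝ F]
    {f : ℝ × ℝ → F} (hf : IsB f) : IsB (opK f) :=
  ⟨contDiff_infty.2 fun n => opK_contDiff n hf, fun n => opK_bdd n hf⟩

theorem IsB.opP_opK {F : Type*} [NormedAddCommGroup F] [NormedSpace ℝ F]
    {f : ℝ × ℝ → F} (hf : IsB f) (v : ℝ × ℝ) : _root_.opP v (_root_.opK f) =
      _root_.opK (_root_.opP v f) := by
  funext p
  have h : (_root_.opK (fderiv ℝ f) p) v = _root_.opK (fun p => fderiv ℝ f p v) p := by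
    unfold _root_.opK
    rw [ContinuousLinearMap.integral_apply (hf.fderiv'.integrable p)]
    rfl
  unfold _root_.opP
  rw [hf.fderiv_opK, h]
  unfold _root_.opK
  rw [← integral_add (hf.integrable p) ((hf.dir v).integrable p)]
  simp only [smul_add]

theorem line_hasDerivAt {F : Type*} [NormedAddCommGroup F] [NormedSpace ℝ F]
    {f : ℝ × ℝ → F} (hf : IsB f) (p v : ℝ × ℝ) (s : ℝ) :
    HasDerivAt (fun s : ℝ => f (p - s • v)) (-(fderiv ℝ f (p - s • v) v)) s := by
  have h1 : HasDerivAt (fun s : ℝ => p - s • v) (-v) s := by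
    simpa using ((hasDerivAt_id s).smul_const v).const_sub p
  have h2 := (hf.differentiable (p - s • v)).hasFDerivAt.comp_hasDerivAt s h1
  rw [map_neg] at h2
  exact h2

theorem line_integral {F : Type*} [NormedAddCommGroup F] [NormedSpace ℝ F] [CompleteSpace F]
    {f : ℝ × ℝ → F} (hf : IsB f) (p v : ℝ × ℝ) :
    ∫ s : ℝ, gamma2 s • opP v (opP v f) (p - s • v) = f p := by
  have hG := hf.opP v
  have hH := hG.opP v
  have hint : Integrable (fun s : ℝ => gamma2 s • opP v (opP v f) (p - s • v)) := by
    obtain ⟨M, hM⟩ := hH.bdd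
    have hc := hH.1.continuous
    exact gamma2_integrable.smul_bdd M
      (Continuous.aestronglyMeasurable (by fun_prop)) (ae_of_all _ fun q => hM _)
  rw [← setIntegral_eq_integral_of_forall_compl_eq_zero (s := Ioi 0)
    (fun s hs => by rw [gamma2_eq, indicator_of_notMem hs, zero_smul])]
  have key := integral_Ioi_of_hasDerivAt_of_tendsto' (a := 0) (m := (0 : F))
    (f := fun s : ℝ => -((s * Real.exp (-s)) • opP v f (p - s • v)
      + Real.exp (-s) • f (p - s • v)))
    (f' := fun s : ℝ => gamma2 s • opP v (opP v f) (p - s • v)) ?_ hint.integrableOn ?_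
  · rw [key]; simp
  · intro s hs
    have he : HasDerivAt (fun s : ℝ => Real.exp (-s)) (-Real.exp (-s)) s := by
      simpa using (hasDerivAt_neg s).exp
    have h := (((hasDerivAt_id s).mul he).smul (line_hasDerivAt hG p v s)).add
      (he.smul (line_hasDerivAt hf p v s))
    refine h.neg.congr_deriv ?_
    have hs' : (0 : ℝ) ≤ s := hs
    have e1 : gamma2 s = s * Real.exp (-s) := by simp [gamma2, hs']
    have e2 : opP v (opP v f) (p - s • v) =
      opP v f (p - s • v) + fderiv ℝ (opP v f) (p - s • v) v := rfl
    have e3 : opP v f (p - s • v) = f (p - s • v) + fderiv ℝ f (p - s • v) v := rfl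
    rw [e1, e2]
    generalize fderiv ℝ (opP v f) (p - s • v) v = A
    simp only [id, e3, Pi.mul_apply]
    module
  · obtain ⟨M, hM⟩ := hf.bdd
    obtain ⟨N, hN⟩ := hG.bdd
    have t1 : Tendsto (fun s : ℝ => s * Real.exp (-s)) atTop (𝓝 0) := by
      simpa using Real.tendsto_pow_mul_exp_neg_atTop_nhds_zero 1
    have t0 : Tendsto (fun s : ℝ => Real.exp (-s)) atTop (𝓝 0) := by
      simpa using Real.tendsto_pow_mul_exp_neg_atTop_nhds_zero 0
    have b1 : Tendsto (fun s : ℝ => (s * Real.exp (-s)) • opP v f (p - s • v)) atTop (𝓝 0) :=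
      NormedField.tendsto_zero_smul_of_tendsto_zero_of_bounded t1
        (isBoundedUnder_of ⟨N, fun s => hN _⟩)
    have b0 : Tendsto (fun s : ℝ => Real.exp (-s) • f (p - s • v)) atTop (𝓝 0) :=
      NormedField.tendsto_zero_smul_of_tendsto_zero_of_bounded t0
        (isBoundedUnder_of ⟨M, fun s => hM _⟩)
    simpa using (b1.add b0).neg

theorem opK_inv {F : Type*} [NormedAddCommGroup F] [NormedSpace ℝ F] [CompleteSpace F]
    {f : ℝ × ℝ → F} (hf : IsB f) :
    opK (opP (0, 1) (opP (0, 1) (opP (1, 0) (opP (1, 0) f)))) = f := by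
  funext p
  have hu := (hf.opP (1, 0)).opP (1, 0)
  have hD := (hu.opP (0, 1)).opP (0, 1)
  have hi := hD.integrable p
  unfold opK
  rw [Measure.volume_eq_prod] at hi ⊢
  rw [integral_prod _ hi]
  calc _ = ∫ s : ℝ, gamma2 s • opP (1, 0) (opP (1, 0) f) (p - s • ((1, 0) : ℝ × ℝ)) := by
        refine integral_congr_ae (ae_of_all _ fun s => ?_)
        simp only
        rw [← line_integral hu (p - s • ((1, 0) : ℝ × ℝ)) (0, 1), ← integral_smul]
        refine integral_congr_ae (ae_of_all _ fun t => ?_)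
        simp only [mul_smul]
        congr 3
        ext <;> simp
    _ = f p := line_integral hf p (1, 0)

end helpers

/-- For `b ∈ B^C(ℝ²)`, the function
`a(x,ξ) = ∫ γ₂(s) γ₂(t) b(x−s, ξ−t) ds dt` belongs to `B^C(ℝ²)` and is the unique solution of
`(1+∂_ξ)²(1+∂ₓ)² a = b`; in particular `D` is a bijection of `B^C(ℝ²)`. -/
theorem Dop_bijective {C : Type*} [NonUnitalCStarAlgebra C]
    (b : ℝ × ℝ → C) (hb : IsBC b) :
    (IsBC (fun p : ℝ × ℝ =>
        ∫ q : ℝ × ℝ, (gamma2 q.1 * gamma2 q.2) • b (p.1 - q.1, p.2 - q.2))) ∧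
    Dop (fun p : ℝ × ℝ =>
        ∫ q : ℝ × ℝ, (gamma2 q.1 * gamma2 q.2) • b (p.1 - q.1, p.2 - q.2)) = b ∧
    (∀ a' : ℝ × ℝ → C, IsBC a' → Dop a' = b →
      a' = fun p : ℝ × ℝ =>
        ∫ q : ℝ × ℝ, (gamma2 q.1 * gamma2 q.2) • b (p.1 - q.1, p.2 - q.2)) := by
  have hb' : IsB b := hb
  have hK : opK b = fun p : ℝ × ℝ =>
      ∫ q : ℝ × ℝ, (gamma2 q.1 * gamma2 q.2) • b (p.1 - q.1, p.2 - q.2) := rfl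
  have hD : ∀ f : ℝ × ℝ → C, Dop f =
      opP (0, 1) (opP (0, 1) (opP (1, 0) (opP (1, 0) f))) := fun _ => rfl
  rw [← hK]
  refine ⟨hb'.opK, ?_, ?_⟩
  · rw [hD, hb'.opP_opK, (hb'.opP _).opP_opK, ((hb'.opP _).opP _).opP_opK,
      (((hb'.opP _).opP _).opP _).opP_opK]
    exact opK_inv hb'
  · intro a' ha' h
    have ha : IsB a' := ha'
    rw [← h, hD]
    exact (opK_inv ha).symm
end

section
/- Let C be a C*-algebra. The identity map on the C-valued Schwartz space S^C(ℝⁿ) extends to a continuous injective linear map I: L²(ℝⁿ, C) → E_n satisfying ‖I(g)‖₂ ≤ ‖g‖_{L²}, where E_n is the Hilbert C*-module completion of S^C(ℝⁿ) with respect to ‖f‖₂ = ‖∫ f(x)*f(x) dx‖_C^{1/2} and ‖g‖_{L²} = (∫ ‖g(x)‖_C² dx)^{1/2}. -/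
open MeasureTheory SchwartzMap

section helpers

variable {C : Type*} [NonUnitalCStarAlgebra C] {X : Type*} [MeasurableSpace X] {μ : Measure X}

/-- If `g` is square integrable and `∫ g* g = 0`, then `g = 0` almost everywhere. -/
lemma ae_zero_of_integral_star_mul_self (g : X → C)
    (hi : Integrable (fun x => star (g x) * g x) μ)
    (h : ∫ x, star (g x) * g x ∂μ = 0) : g =ᵐ[μ] 0 := by
  let _ : PartialOrder C := CStarAlgebra.spectralOrder C
  have _ : StarOrderedRing C := CStarAlgebra.spectralOrderedRing C
  have key : (fun x => star (g x) * g x) =ᵐ[μ] 0 := by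
    refine hi.ae_eq_zero_of_forall_setIntegral_eq_zero fun s hs _ => ?_
    have h1 : 0 ≤ ∫ x in s, star (g x) * g x ∂μ :=
      integral_nonneg fun x => star_mul_self_nonneg (g x)
    have h2 : 0 ≤ ∫ x in sᶜ, star (g x) * g x ∂μ :=
      integral_nonneg fun x => star_mul_self_nonneg (g x)
    have h3 := integral_add_compl hs hi
    rw [h] at h3
    refine le_antisymm ?_ h1
    calc _ ≤ _ := le_add_of_nonneg_right h2
      _ = 0 := h3
  filter_upwards [key] with x hx
  exact CStarRing.star_mul_self_eq_zero_iff (g x) |>.1 hx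

/-- The `C`-valued inner square on `L²`. -/
noncomputable def innerSq (g : Lp C 2 μ) : C :=
  (ContinuousLinearMap.mul ℂ C).lpPairing μ 2 2 (star g) g

lemma innerSq_eq (g : Lp C 2 μ) : innerSq g = ∫ x, star (g x) * g x ∂μ := by
  rw [innerSq, ContinuousLinearMap.lpPairing_eq_integral]
  refine integral_congr_ae ?_
  filter_upwards [Lp.coeFn_star g] with x hx
  simp [hx]

lemma continuous_innerSq : Continuous (innerSq : Lp C 2 μ → C) := by
  have hs : Continuous (star : Lp C 2 μ → Lp C 2 μ) := by
    refine (Isometry.of_dist_eq fun f g => ?_).continuous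
    rw [dist_eq_norm, dist_eq_norm, Lp.norm_def, Lp.norm_def]
    congr 1
    refine eLpNorm_congr_norm_ae ?_
    filter_upwards [Lp.coeFn_star f, Lp.coeFn_star g, Lp.coeFn_sub f g,
      Lp.coeFn_sub (star f) (star g)] with x h1 h2 h3 h4
    rw [h3, h4, Pi.sub_apply, Pi.sub_apply, h1, h2, Pi.star_apply, Pi.star_apply, ← star_sub,
      norm_star]
  unfold innerSq
  fun_prop

lemma integrable_star_mul_self (g : Lp C 2 μ) :
    Integrable (fun x => star (g x) * g x) μ := by
  have h := L1.integrable_coeFn ((ContinuousLinearMap.mul ℂ C).holder 1 (star g) g)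
  refine h.congr ?_
  filter_upwards [Lp.coeFn_star g,
    (ContinuousLinearMap.mul ℂ C).coeFn_holder (r := 1) (star g) g] with x hx hy
  simp [hx, hy]

lemma norm_innerSq_le (g : Lp C 2 μ) : ‖innerSq g‖ ≤ ‖g‖ ^ 2 := by
  rw [innerSq_eq]
  refine (norm_integral_le_integral_norm _).trans (le_of_eq ?_)
  rw [Lp.norm_def, (Lp.memLp g).eLpNorm_eq_integral_rpow_norm (by norm_num) (by norm_num)]
  have h0 : 0 ≤ ∫ x, ‖g x‖ ^ 2 ∂μ := integral_nonneg fun x => by positivity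
  simp only [CStarRing.norm_star_mul_self, ← pow_two]
  rw [ENNReal.toReal_ofReal (by positivity)]
  simp only [ENNReal.toReal_ofNat, Real.rpow_ofNat]
  rw [← Real.rpow_natCast, ← Real.rpow_mul h0]
  norm_num

end helpers


/-- Let `C` be a C*-algebra and let `E_n` be (any realization of) the Hilbert C*-module
completion of the `C`-valued Schwartz space `S^C(ℝⁿ)` with respect to the norm
`‖f‖₂ = ‖∫ f(x)* f(x) dx‖^{1/2}`, i.e. a Banach space `E` together with a linear map
`j : S^C(ℝⁿ) → E` with dense range satisfying `‖j f‖ = ‖f‖₂`.  Then the identity map on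
`S^C(ℝⁿ)` extends to a continuous injective linear map `I : L²(ℝⁿ, C) → E_n` with
`‖I g‖ ≤ ‖g‖_{L²}`. -/
theorem l2_embeds_into_hilbert_module
    {C : Type*} [NonUnitalCStarAlgebra C] (n : ℕ)
    (E : Type*) [NormedAddCommGroup E] [NormedSpace ℂ E] [CompleteSpace E]
    (j : 𝓢(EuclideanSpace ℝ (Fin n), C) →ₗ[ℂ] E)
    (hj : ∀ f : 𝓢(EuclideanSpace ℝ (Fin n), C),
      ‖j f‖ = Real.sqrt ‖∫ x : EuclideanSpace ℝ (Fin n), star (f x) * f x‖)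
    (hdense : DenseRange j) :
    ∃ I : Lp C 2 (volume : Measure (EuclideanSpace ℝ (Fin n))) →ₗ[ℂ] E,
      Continuous I ∧ Function.Injective I ∧
      (∀ (g : Lp C 2 (volume : Measure (EuclideanSpace ℝ (Fin n))))
        (f : 𝓢(EuclideanSpace ℝ (Fin n), C)), (↑↑g : EuclideanSpace ℝ (Fin n) → C) =ᵐ[volume] ⇑f →
          I g = j f) ∧
      ∀ g : Lp C 2 (volume : Measure (EuclideanSpace ℝ (Fin n))), ‖I g‖ ≤ ‖g‖ := by
  set T : 𝓢(EuclideanSpace ℝ (Fin n), C) →ₗ[ℂ]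
    Lp C 2 (volume : Measure (EuclideanSpace ℝ (Fin n))) :=
      (toLpCLM ℂ C 2 volume).toLinearMap with hT
  have hTc : ∀ f, (T f : EuclideanSpace ℝ (Fin n) → C) =ᵐ[volume] f := fun f =>
    f.coeFn_toLp 2 volume
  have hTd : DenseRange T :=
    denseRange_toLpCLM (F := C) (E := EuclideanSpace ℝ (Fin n)) (p := 2) (μ := volume) (by norm_num)
  have hTj : ∀ f, ‖j f‖ = Real.sqrt ‖innerSq (T f)‖ := by
    intro f
    rw [hj, innerSq_eq]
    congr 2
    refine integral_congr_ae ?_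
    filter_upwards [hTc f] with x hx
    rw [hx]
  have hb : ∀ f, ‖j f‖ ≤ 1 * ‖T f‖ := by
    intro f
    rw [hTj, one_mul]
    exact Real.sqrt_le_iff.2 ⟨norm_nonneg _, norm_innerSq_le _⟩
  have hI : ∀ g, ‖j.extendOfNorm T g‖ = Real.sqrt ‖innerSq g‖ := by
    intro g
    refine hTd.induction_on (p := fun g => ‖j.extendOfNorm T g‖ = Real.sqrt ‖innerSq g‖) g ?_ ?_
    · exact isClosed_eq (by fun_prop) (continuous_innerSq.norm.sqrt)
    · intro f
      rw [LinearMap.extendOfNorm_eq hTd ⟨1, hb⟩, hTj]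
  refine ⟨(j.extendOfNorm T).toLinearMap, (j.extendOfNorm T).continuous, ?_, ?_, ?_⟩
  · rw [injective_iff_map_eq_zero]
    intro g hg
    have h1 : innerSq g = 0 := by
      have h2 := hI g
      rw [show j.extendOfNorm T g = 0 from hg, norm_zero] at h2
      exact norm_eq_zero.1 ((Real.sqrt_eq_zero (norm_nonneg _)).1 h2.symm)
    rw [innerSq_eq] at h1
    exact (Lp.eq_zero_iff_ae_eq_zero).2
      (ae_zero_of_integral_star_mul_self _ (integrable_star_mul_self g) h1)
  · intro g f hgf
    have : g = T f := Lp.ext (hgf.trans (hTc f).symm)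
    rw [this]
    exact LinearMap.extendOfNorm_eq hTd ⟨1, hb⟩ f
  · intro g
    simpa using LinearMap.norm_extendOfNorm_apply_le hTd 1 hb g
end
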